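/- For integers n and t with n ≥ 2t + 3 and t ≥ 2, D_R(G9) − D_R(G8) = n + t − 5/3 > 0, where G8 is the cactus consisting of t − 2 triangles, two quadrilaterals C4, and n − 2t − 3 pendent edges all sharing a common vertex v1, and G9 is the cactus consisting of t − 1 triangles, one quadrilateral C4, and n − 2t − 3 pendent edges at the common vertex v1, together with one pendent edge attached at a non-central vertex v2 of one of the triangles; moreover D_R(G9) − D_R(G⁰(n,t)) = (13/3)n + (5/3)t − 67/3. -/

import Mathlib

open Finset

/-- Effective resistance between two vertices of a graph (for a connected graph
this is the effective resistance when every edge is a unit resistor), defined via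
the matrix-tree / spanning-two-forest determinant formula. -/
noncomputable def effRes {V : Type*} [Finite V] (G : SimpleGraph V) (u v : V) : ℝ :=
  letI := Fintype.ofFinite V
  letI := Classical.decEq V
  letI : DecidableRel G.Adj := Classical.decRel _
  if u = v then 0
  else
    Matrix.det ((G.lapMatrix ℝ).submatrix
        (fun w : {w : V // w ≠ u ∧ w ≠ v} => (w : V)) (fun w => (w : V)))
      / Matrix.det ((G.lapMatrix ℝ).submatrix
        (fun w : {w : V // w ≠ u} => (w : V)) (fun w => (w : V)))

/-- The degree resistance distance `D_R(G) = Σ_{ {u,v} ⊆ V } (d(u)+d(v)) R(u,v)`. -/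
noncomputable def degRes {V : Type*} [Finite V] (G : SimpleGraph V) : ℝ :=
  letI := Fintype.ofFinite V
  letI := Classical.decEq V
  letI : DecidableRel G.Adj := Classical.decRel _
  (1 / 2) * ∑ u : V, ∑ v : V, ((G.degree u : ℝ) + (G.degree v : ℝ)) * effRes G u v

/-- The Kirchhoff index `Kf(G) = Σ_{ {u,v} ⊆ V } R(u,v)`. -/
noncomputable def kirchhoffIndex {V : Type*} [Finite V] (G : SimpleGraph V) : ℝ :=
  letI := Fintype.ofFinite V
  (1 / 2) * ∑ u : V, ∑ v : V, effRes G u v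

/-- `Kf_v(G) = Σ_{u ∈ V} R(u,v)`. -/
noncomputable def Kfv {V : Type*} [Finite V] (G : SimpleGraph V) (v : V) : ℝ :=
  letI := Fintype.ofFinite V
  ∑ u : V, effRes G u v

/-- `D_v(G) = Σ_{u ∈ V} d(u) R(u,v)`. -/
noncomputable def Dv {V : Type*} [Finite V] (G : SimpleGraph V) (v : V) : ℝ :=
  letI := Fintype.ofFinite V
  letI := Classical.decEq V
  letI : DecidableRel G.Adj := Classical.decRel _
  ∑ u : V, (G.degree u : ℝ) * effRes G u v

/-- A subgraph is a cycle if it is connected and `2`-regular. -/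
def IsCycleSubgraph {V : Type*} {G : SimpleGraph V} (H : G.Subgraph) : Prop :=
  H.coe.Connected ∧ ∀ v ∈ H.verts, {u | H.Adj v u}.ncard = 2

/-- A cactus is a connected graph in which any two distinct cycles share at most
one vertex (equivalently, every block is an edge or a cycle). -/
def IsCactus {V : Type*} (G : SimpleGraph V) : Prop :=
  G.Connected ∧ ∀ H₁ H₂ : G.Subgraph, IsCycleSubgraph H₁ → IsCycleSubgraph H₂ →
    H₁ ≠ H₂ → (H₁.verts ∩ H₂.verts).ncard ≤ 1

/-- The number of cycles of a graph. -/
noncomputable def numCycles {V : Type*} (G : SimpleGraph V) : ℕ :=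
  {H : G.Subgraph | IsCycleSubgraph H}.ncard

/-- `G ∈ Cact(n;t)`: `G` is a cactus with `n` vertices and `t` cycles. -/
def MemCact {V : Type*} (n t : ℕ) (G : SimpleGraph V) : Prop :=
  IsCactus G ∧ Nat.card V = n ∧ numCycles G = t

/-- `G⁰(n,t)`: `t` triangles (on vertices `2i+1, 2i+2`, `i < t`) and `n - 2t - 1`
pendent edges, all sharing the common vertex `0`. -/
def G0 (n t : ℕ) : SimpleGraph (Fin n) :=
  SimpleGraph.fromRel (fun a b =>
    a.val = 0 ∨ (Odd a.val ∧ b.val = a.val + 1 ∧ b.val ≤ 2 * t))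

/-- `G3`: `t` triangles, `n - 2t - 3` pendent edges, and one pendent path of
length 2 (through `2t+1` to `2t+2`), all attached at the common vertex `0`. -/
def G3g (n t : ℕ) : SimpleGraph (Fin n) :=
  SimpleGraph.fromRel (fun a b =>
    (a.val = 0 ∧ b.val ≠ 2 * t + 2) ∨
    (Odd a.val ∧ b.val = a.val + 1 ∧ b.val ≤ 2 * t) ∨
    (a.val = 2 * t + 1 ∧ b.val = 2 * t + 2))

/-- `G4`: `t` triangles and `n - 2t - 2` pendent edges at the common vertex `0`,
together with one pendent edge (to `2t+1`) attached at the triangle vertex `1`. -/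
def G4g (n t : ℕ) : SimpleGraph (Fin n) :=
  SimpleGraph.fromRel (fun a b =>
    (a.val = 0 ∧ b.val ≠ 2 * t + 1) ∨
    (Odd a.val ∧ b.val = a.val + 1 ∧ b.val ≤ 2 * t) ∨
    (a.val = 1 ∧ b.val = 2 * t + 1))

/-- `G5`: `t - 1` triangles, one quadrilateral `C₄` (on `0, 2t-1, 2t, 2t+1`), and
`n - 2t - 2` pendent edges, all sharing the common vertex `0`. -/
def G5g (n t : ℕ) : SimpleGraph (Fin n) :=
  SimpleGraph.fromRel (fun a b =>
    (a.val = 0 ∧ b.val ≠ 2 * t) ∨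
    (Odd a.val ∧ b.val = a.val + 1 ∧ b.val ≤ 2 * t - 2) ∨
    (a.val = 2 * t - 1 ∧ b.val = 2 * t) ∨
    (a.val = 2 * t ∧ b.val = 2 * t + 1))

/-- `G6`: `t - 1` triangles, one quadrilateral `C₄` (on `0, 2t-1, 2t, 2t+1`), and
`n - 2t - 3` pendent edges at the common vertex `0`, together with one pendent edge
(to `2t+2`) attached at the quadrilateral vertex `2t-1`, which is adjacent to `0`. -/
def G6g (n t : ℕ) : SimpleGraph (Fin n) :=
  SimpleGraph.fromRel (fun a b =>
    (a.val = 0 ∧ b.val ≠ 2 * t ∧ b.val ≠ 2 * t + 2) ∨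
    (Odd a.val ∧ b.val = a.val + 1 ∧ b.val ≤ 2 * t - 2) ∨
    (a.val = 2 * t - 1 ∧ (b.val = 2 * t ∨ b.val = 2 * t + 2)) ∨
    (a.val = 2 * t ∧ b.val = 2 * t + 1))

/-- `G7`: `t - 1` triangles, one quadrilateral `C₄` (on `0, 2t-1, 2t, 2t+1`), and
`n - 2t - 3` pendent edges at the common vertex `0`, together with one pendent edge
(to `2t+2`) attached at the quadrilateral vertex `2t`, which is opposite to `0`. -/
def G7g (n t : ℕ) : SimpleGraph (Fin n) :=
  SimpleGraph.fromRel (fun a b =>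
    (a.val = 0 ∧ b.val ≠ 2 * t ∧ b.val ≠ 2 * t + 2) ∨
    (Odd a.val ∧ b.val = a.val + 1 ∧ b.val ≤ 2 * t - 2) ∨
    (a.val = 2 * t - 1 ∧ b.val = 2 * t) ∨
    (a.val = 2 * t ∧ (b.val = 2 * t + 1 ∨ b.val = 2 * t + 2)))

/-- `G8`: `t - 2` triangles, two quadrilaterals `C₄` (on `0, 2t-3, 2t-2, 2t-1` and
on `0, 2t, 2t+1, 2t+2`), and `n - 2t - 3` pendent edges, all sharing the common
vertex `0`. -/
def G8g (n t : ℕ) : SimpleGraph (Fin n) :=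
  SimpleGraph.fromRel (fun a b =>
    (a.val = 0 ∧ b.val ≠ 2 * t - 2 ∧ b.val ≠ 2 * t + 1) ∨
    (Odd a.val ∧ b.val = a.val + 1 ∧ b.val ≤ 2 * t - 4) ∨
    (a.val = 2 * t - 3 ∧ b.val = 2 * t - 2) ∨
    (a.val = 2 * t - 2 ∧ b.val = 2 * t - 1) ∨
    (a.val = 2 * t ∧ b.val = 2 * t + 1) ∨
    (a.val = 2 * t + 1 ∧ b.val = 2 * t + 2))

/-- `G9`: `t - 1` triangles, one quadrilateral `C₄` (on `0, 2t-1, 2t, 2t+1`), and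
`n - 2t - 3` pendent edges at the common vertex `0`, together with one pendent edge
(to `2t+2`) attached at the non-central triangle vertex `1`. -/
def G9g (n t : ℕ) : SimpleGraph (Fin n) :=
  SimpleGraph.fromRel (fun a b =>
    (a.val = 0 ∧ b.val ≠ 2 * t ∧ b.val ≠ 2 * t + 2) ∨
    (Odd a.val ∧ b.val = a.val + 1 ∧ b.val ≤ 2 * t - 2) ∨
    (a.val = 2 * t - 1 ∧ b.val = 2 * t) ∨
    (a.val = 2 * t ∧ b.val = 2 * t + 1) ∨
    (a.val = 1 ∧ b.val = 2 * t + 2))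

/-- `G10`: `t - 1` triangles, one pentagon `C₅` (on `0, 2t-1, 2t, 2t+1, 2t+2`), and
`n - 2t - 3` pendent edges, all sharing the common vertex `0`. -/
def G10g (n t : ℕ) : SimpleGraph (Fin n) :=
  SimpleGraph.fromRel (fun a b =>
    (a.val = 0 ∧ b.val ≠ 2 * t ∧ b.val ≠ 2 * t + 1) ∨
    (Odd a.val ∧ b.val = a.val + 1 ∧ b.val ≤ 2 * t - 2) ∨
    (a.val = 2 * t - 1 ∧ b.val = 2 * t) ∨
    (a.val = 2 * t ∧ b.val = 2 * t + 1) ∨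
    (a.val = 2 * t + 1 ∧ b.val = 2 * t + 2))

section General

set_option linter.unusedSectionVars false

open Matrix

variable {V : Type*} [Fintype V] [DecidableEq V]

/-- Sum of the entries of `L x` vanishes when the row sums of a symmetric `L` do. -/
lemma sum_mulVec_zero (L : Matrix V V ℝ) (hs : L.IsSymm) (h1 : L *ᵥ (fun _ => 1) = 0)
    (x : V → ℝ) : ∑ w, (L *ᵥ x) w = 0 := by
  have : (fun _ => (1:ℝ)) ⬝ᵥ (L *ᵥ x) = 0 := by
    rw [dotProduct_mulVec, ← mulVec_transpose, hs.eq, h1, zero_dotProduct]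
  simpa [dotProduct] using this

lemma dot_symm (L : Matrix V V ℝ) (hs : L.IsSymm) (x y : V → ℝ) :
    ∑ w, x w * (L *ᵥ y) w = ∑ w, (L *ᵥ x) w * y w := by
  have : x ⬝ᵥ (L *ᵥ y) = (L *ᵥ x) ⬝ᵥ y := by
    rw [dotProduct_mulVec, ← mulVec_transpose, hs.eq]
  simpa [dotProduct] using this

lemma green_full (L : Matrix V V ℝ) (hs : L.IsSymm) (h1 : L *ᵥ (fun _ => 1) = 0) (r v : V)
    (x : V → ℝ) (hx : ∀ w, w ≠ r → (L *ᵥ x) w = if w = v then 1 else 0) (w : V) :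
    (L *ᵥ x) w = (if w = v then 1 else 0) - (if w = r then 1 else 0) := by
  by_cases hw : w = r
  · subst hw
    have h := sum_mulVec_zero L hs h1 x
    rw [← Finset.add_sum_erase _ _ (Finset.mem_univ w)] at h
    have h2 : ∑ z ∈ Finset.univ.erase w, (L *ᵥ x) z
        = ∑ z ∈ Finset.univ.erase w, if z = v then 1 else 0 :=
      Finset.sum_congr rfl fun z hz => hx z (Finset.ne_of_mem_erase hz)
    have h3 : (if w = v then (1:ℝ) else 0) +
        ∑ z ∈ Finset.univ.erase w, (if z = v then (1:ℝ) else 0) = 1 := by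
      rw [Finset.add_sum_erase _ (fun z => if z = v then (1:ℝ) else 0) (Finset.mem_univ w)]
      simp
    rw [h2] at h
    simp only [if_true]
    linarith
  · rw [hx w hw]; simp [hw]

lemma green_pair (L : Matrix V V ℝ) (hs : L.IsSymm) (h1 : L *ᵥ (fun _ => 1) = 0) (r v : V)
    (x : V → ℝ) (hx : ∀ w, w ≠ r → (L *ᵥ x) w = if w = v then 1 else 0) (y : V → ℝ) :
    ∑ w, x w * (L *ᵥ y) w = y v - y r := by
  rw [dot_symm L hs]
  simp_rw [green_full L hs h1 r v x hx, sub_mul, Finset.sum_sub_distrib]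
  simp

lemma extend_mulVec (L : Matrix V V ℝ) (u : V) (y : {w : V // w ≠ u} → ℝ) (w : V) :
    (L *ᵥ (fun z => if h : z ≠ u then y ⟨z, h⟩ else 0)) w
      = ∑ z : {w : V // w ≠ u}, L w z * y z := by
  have h := Fintype.sum_subtype_add_sum_subtype (fun z => z ≠ u)
    (fun z => L w z * if h : z ≠ u then y ⟨z, h⟩ else 0)
  have h2 : ∑ z : {z // ¬ z ≠ u}, (L w z * if h : (z : V) ≠ u then y ⟨z, h⟩ else 0) = 0 :=
    Finset.sum_eq_zero fun z _ => by rw [dif_neg z.2, mul_zero]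
  rw [h2, add_zero] at h
  have h3 : (L *ᵥ (fun z => if h : z ≠ u then y ⟨z, h⟩ else 0)) w
      = ∑ z, L w z * if h : z ≠ u then y ⟨z, h⟩ else 0 := rfl
  rw [h3, ← h]
  exact Finset.sum_congr rfl fun z _ => by rw [dif_pos z.2]

lemma det_ne_zero_of_green (L : Matrix V V ℝ) (hs : L.IsSymm) (h1 : L *ᵥ (fun _ => 1) = 0)
    (r : V) (g : V → V → ℝ)
    (hg : ∀ v w, w ≠ r → (L *ᵥ g v) w = if w = v then 1 else 0) (u : V) :
    Matrix.det (L.submatrix (fun w : {w : V // w ≠ u} => (w : V)) (fun w => (w : V))) ≠ 0 := by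
  intro h0
  obtain ⟨y, hy, hL⟩ := Matrix.exists_mulVec_eq_zero_iff.mpr h0
  set x : V → ℝ := fun z => if h : z ≠ u then y ⟨z, h⟩ else 0 with hx
  have hxw : ∀ w, w ≠ u → (L *ᵥ x) w = 0 := by
    intro w hw
    rw [hx, extend_mulVec]
    exact congrFun hL ⟨w, hw⟩
  have hxu : (L *ᵥ x) u = 0 := by
    have := sum_mulVec_zero L hs h1 x
    rwa [Finset.sum_eq_single u (fun w _ hw => hxw w hw) (by simp)] at this
  have hall : ∀ w, (L *ᵥ x) w = 0 := fun w => by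
    by_cases hw : w = u
    · rw [hw, hxu]
    · exact hxw w hw
  have hc : ∀ v, x v = x r := fun v => by
    have := green_pair L hs h1 r v (g v) (hg v) x
    simp only [hall, mul_zero, Finset.sum_const_zero] at this
    linarith
  have hz : x u = 0 := by simp [hx]
  apply hy
  ext ⟨v, hv⟩
  have h2 : x v = 0 := by rw [hc v, ← hc u, hz]
  simpa [hx, hv] using h2

/-- Cramer's rule: the ratio of principal minors is a diagonal entry of the inverse. -/
lemma det_ratio (L : Matrix V V ℝ) (u v : V) (huv : u ≠ v) (x : V → ℝ) (hxu : x u = 0)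
    (hx : ∀ w, w ≠ u → (L *ᵥ x) w = if w = v then 1 else 0)
    (hd : Matrix.det (L.submatrix (fun w : {w : V // w ≠ u} => (w : V)) (fun w => (w : V))) ≠ 0) :
    Matrix.det (L.submatrix (fun w : {w : V // w ≠ u ∧ w ≠ v} => (w : V)) (fun w => (w : V))) /
      Matrix.det (L.submatrix (fun w : {w : V // w ≠ u} => (w : V)) (fun w => (w : V))) = x v := by
  set A : Matrix {w : V // w ≠ u} {w : V // w ≠ u} ℝ := L.submatrix (fun w : {w : V // w ≠ u} => (w : V)) (fun w => (w : V)) with hA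
  set v' : {w : V // w ≠ u} := ⟨v, huv.symm⟩
  set y : {w : V // w ≠ u} → ℝ := fun z => x z with hy
  have hAy : A *ᵥ y = Pi.single v' 1 := by
    ext ⟨w, hw⟩
    have h2 := extend_mulVec L u y w
    have h3 : (fun z => if h : z ≠ u then y ⟨z, h⟩ else 0) = x := by
      ext z
      by_cases h : z = u
      · simp [h, hxu]
      · simp [h, hy]
    rw [h3, hx w hw] at h2
    rw [Pi.single_apply]
    simp only [v', Subtype.mk.injEq]
    rw [h2]; rfl
  have hcr : A.det * x v = A.cramer (Pi.single v' 1) v' := by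
    rw [← hAy, cramer_eq_adjugate_mulVec, mulVec_mulVec, adjugate_mul, smul_mulVec, one_mulVec]
    simp [hy, v']
  rw [cramer_apply] at hcr
  rw [div_eq_iff hd, mul_comm, hcr]
  rw [twoBlockTriangular_det' _ (fun w => w ≠ v')]
  · have e2 : (toSquareBlockProp (A.updateCol v' (Pi.single v' 1)) fun i => ¬ i ≠ v').det = 1 := by
      have : (toSquareBlockProp (A.updateCol v' (Pi.single v' 1)) fun i => ¬ i ≠ v') = 1 := by
        ext ⟨i, hi⟩ ⟨j, hj⟩
        simp only [not_not] at hi hj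
        subst hi; subst hj
        simp [toSquareBlockProp]
      rw [this, det_one]
    rw [e2, mul_one]
    let e : {w : V // w ≠ u ∧ w ≠ v} ≃ {w : {w : V // w ≠ u} // w ≠ v'} :=
      { toFun := fun w => ⟨⟨w.1, w.2.1⟩, fun h => w.2.2 (congrArg Subtype.val h)⟩
        invFun := fun w => ⟨w.1.1, w.1.2, fun h => w.2 (Subtype.ext h)⟩
        left_inv := fun w => rfl
        right_inv := fun w => rfl }
    rw [← det_submatrix_equiv_self e]
    congr 1
    ext i j
    simp only [submatrix_apply, toSquareBlockProp, toBlock_apply]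
    rw [updateCol_ne (e j).2]
    rfl
  · intro i hi j hj
    simp only [not_not] at hj
    subst hj
    simp [hi]

variable (G : SimpleGraph V) [DecidableRel G.Adj]

lemma effRes_eq (u v : V) : effRes G u v = if u = v then 0
  else
    Matrix.det ((G.lapMatrix ℝ).submatrix
        (fun w : {w : V // w ≠ u ∧ w ≠ v} => (w : V)) (fun w => (w : V)))
      / Matrix.det ((G.lapMatrix ℝ).submatrix
        (fun w : {w : V // w ≠ u} => (w : V)) (fun w => (w : V))) := by
  unfold effRes
  congr!

lemma degRes_eq : degRes G =
    (1 / 2) * ∑ u : V, ∑ v : V, ((G.degree u : ℝ) + (G.degree v : ℝ)) * effRes G u v := by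
  unfold degRes
  congr!

lemma effRes_green (r : V) (g : V → V → ℝ)
    (hg : ∀ v w, w ≠ r → (G.lapMatrix ℝ *ᵥ g v) w = if w = v then 1 else 0) (u v : V) :
    effRes G u v = g u u + g v v - g u v - g v u := by
  rw [effRes_eq]
  split_ifs with h
  · subst h; ring
  · have hs := G.isSymm_lapMatrix (R := ℝ)
    have h1 := G.lapMatrix_mulVec_const_eq_zero (R := ℝ)
    rw [det_ratio _ u v h (fun w => g v w - g u w - (g v u - g u u))]
    · ring
    · ring
    · intro w hw
      have e : (fun w => g v w - g u w - (g v u - g u u))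
          = g v - g u - (g v u - g u u) • (fun _ => (1:ℝ)) := by
        ext w; simp
      rw [e, mulVec_sub, mulVec_sub, mulVec_smul, h1]
      simp only [Pi.sub_apply, green_full _ hs h1 r _ _ (hg _)]
      simp [hw]
    · exact det_ne_zero_of_green _ hs h1 r g hg u

/-- `D_R` in terms of the Green function `g` grounded at `r` and its row sums `s`. -/
lemma degRes_green (r : V) (g : V → V → ℝ) (s : V → ℝ)
    (hg0 : ∀ v, g v r = 0) (hs0 : s r = 0)
    (hg : ∀ v w, w ≠ r → (G.lapMatrix ℝ *ᵥ g v) w = if w = v then 1 else 0)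
    (hgs : ∀ w, w ≠ r → (G.lapMatrix ℝ *ᵥ s) w = 1) :
    degRes G = Fintype.card V * ∑ u, (G.degree u : ℝ) * g u u
      + (∑ u, (G.degree u : ℝ)) * ∑ u, g u u - 2 * ∑ u, (G.degree u : ℝ) * s u := by
  have hs := G.isSymm_lapMatrix (R := ℝ)
  have h1 := G.lapMatrix_mulVec_const_eq_zero (R := ℝ)
  have hsum : ∀ u, ∑ w, g u w = s u := fun u => by
    have := green_pair _ hs h1 r u (g u) (hg u) s
    rw [hs0, sub_zero] at this
    rw [← this]
    refine Finset.sum_congr rfl fun w _ => ?_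
    by_cases hw : w = r
    · rw [hw, hg0, zero_mul]
    · rw [hgs w hw, mul_one]
  have hsymm : ∀ u v, g u v = g v u := fun u v => by
    have a := green_pair _ hs h1 r u (g u) (hg u) (g v)
    have b := green_pair _ hs h1 r v (g v) (hg v) (g u)
    rw [dot_symm _ hs, hg0, sub_zero] at a
    rw [hg0, sub_zero] at b
    rw [← a, ← b]
    exact Finset.sum_congr rfl fun w _ => mul_comm _ _
  rw [degRes_eq]
  simp_rw [effRes_green G r g hg]
  have key : ∀ u v, ((G.degree u : ℝ) + (G.degree v : ℝ)) * (g u u + g v v - g u v - g v u)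
      = (G.degree u : ℝ) * g u u + (G.degree u : ℝ) * g v v - 2 * ((G.degree u : ℝ) * g u v)
       + ((G.degree v : ℝ) * g v v + (G.degree v : ℝ) * g u u - 2 * ((G.degree v : ℝ) * g v u)) := by
    intro u v; rw [hsymm v u]; ring
  have hA : ∑ u, ∑ v, ((G.degree u : ℝ) * g u u + (G.degree u : ℝ) * g v v
      - 2 * ((G.degree u : ℝ) * g u v)) = Fintype.card V * ∑ u, (G.degree u : ℝ) * g u u
      + (∑ u, (G.degree u : ℝ)) * ∑ u, g u u - 2 * ∑ u, (G.degree u : ℝ) * s u := by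
    have hrow : ∀ u, ∑ v, ((G.degree u : ℝ) * g u u + (G.degree u : ℝ) * g v v
        - 2 * ((G.degree u : ℝ) * g u v)) = Fintype.card V * ((G.degree u : ℝ) * g u u)
        + (G.degree u : ℝ) * (∑ v, g v v) - 2 * ((G.degree u : ℝ) * s u) := fun u => by
      rw [Finset.sum_sub_distrib, Finset.sum_add_distrib, ← Finset.mul_sum, ← Finset.mul_sum,
        ← Finset.mul_sum, ← Finset.mul_sum, hsum, Finset.sum_const, Finset.card_univ, nsmul_eq_mul]
      ring
    rw [Finset.sum_congr rfl fun u _ => hrow u, Finset.sum_sub_distrib, Finset.sum_add_distrib,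
      ← Finset.mul_sum, ← Finset.mul_sum, ← Finset.sum_mul]
  have hB : ∑ u, ∑ v, ((G.degree v : ℝ) * g v v + (G.degree v : ℝ) * g u u
      - 2 * ((G.degree v : ℝ) * g v u)) = Fintype.card V * ∑ u, (G.degree u : ℝ) * g u u
      + (∑ u, (G.degree u : ℝ)) * ∑ u, g u u - 2 * ∑ u, (G.degree u : ℝ) * s u := by
    rw [Finset.sum_comm, hA]
  have hC : ∀ f h : V → V → ℝ, ∑ u, ∑ v, (f u v + h u v) = ∑ u, ∑ v, f u v + ∑ u, ∑ v, h u v := by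
    intro f h; simp_rw [Finset.sum_add_distrib]
  simp_rw [key]
  rw [hC (fun u v => (G.degree u : ℝ) * g u u + (G.degree u : ℝ) * g v v
      - 2 * ((G.degree u : ℝ) * g u v)) (fun u v => (G.degree v : ℝ) * g v v
      + (G.degree v : ℝ) * g u u - 2 * ((G.degree v : ℝ) * g v u)), hA, hB]
  ring

lemma lap_one (w a : V) (h : ∀ z, G.Adj w z ↔ z = a) :
    (G.degree w : ℝ) = 1 ∧ ∀ x : V → ℝ, (G.lapMatrix ℝ *ᵥ x) w = x w - x a := by
  have e : G.neighborFinset w = {a} := by ext z; simp [h]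
  have d : (G.degree w : ℝ) = 1 := by
    rw [← G.card_neighborFinset_eq_degree, e]; simp
  refine ⟨d, fun x => ?_⟩
  rw [SimpleGraph.lapMatrix_mulVec_apply, d, e]; simp

lemma lap_two (w a b : V) (hab : a ≠ b) (h : ∀ z, G.Adj w z ↔ z = a ∨ z = b) :
    (G.degree w : ℝ) = 2 ∧ ∀ x : V → ℝ, (G.lapMatrix ℝ *ᵥ x) w = 2 * x w - x a - x b := by
  have e : G.neighborFinset w = {a, b} := by ext z; simp [h]
  have d : (G.degree w : ℝ) = 2 := by
    rw [← G.card_neighborFinset_eq_degree, e, Finset.card_pair hab]; simp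
  refine ⟨d, fun x => ?_⟩
  rw [SimpleGraph.lapMatrix_mulVec_apply, d, e, Finset.sum_pair hab]; ring

lemma lap_three (w a b c : V) (hab : a ≠ b) (hac : a ≠ c) (hbc : b ≠ c)
    (h : ∀ z, G.Adj w z ↔ z = a ∨ z = b ∨ z = c) :
    (G.degree w : ℝ) = 3 ∧
      ∀ x : V → ℝ, (G.lapMatrix ℝ *ᵥ x) w = 3 * x w - x a - x b - x c := by
  have e : G.neighborFinset w = {a, b, c} := by ext z; simp [h]
  have d : (G.degree w : ℝ) = 3 := by
    rw [← G.card_neighborFinset_eq_degree, e, Finset.card_eq_three.mpr ⟨a, b, c, hab, hac, hbc, rfl⟩]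
    simp
  refine ⟨d, fun x => ?_⟩
  rw [SimpleGraph.lapMatrix_mulVec_apply, d, e, Finset.sum_insert (by simp [hab, hac]),
    Finset.sum_pair hbc]; ring

end General

section Concrete

open Matrix

lemma fin_degRes (n : ℕ) (hn : 0 < n) (G : SimpleGraph (Fin n)) [DecidableRel G.Adj]
    (g : ℕ → ℕ → ℝ) (s d : ℕ → ℝ) (hg0 : ∀ v, g v 0 = 0) (hs0 : s 0 = 0)
    (hd0 : (G.degree ⟨0, hn⟩ : ℝ) = d 0)
    (h : ∀ w : Fin n, w.val ≠ 0 → (G.degree w : ℝ) = d w.val ∧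
      (∀ v : ℕ, (G.lapMatrix ℝ *ᵥ (fun z : Fin n => g v z.val)) w
        = if w.val = v then 1 else 0) ∧
      (G.lapMatrix ℝ *ᵥ (fun z : Fin n => s z.val)) w = 1) :
    degRes G = n * ∑ i ∈ range n, d i * g i i
      + (∑ i ∈ range n, d i) * ∑ i ∈ range n, g i i - 2 * ∑ i ∈ range n, d i * s i := by
  have hd : ∀ w : Fin n, (G.degree w : ℝ) = d w.val := by
    intro w
    by_cases hw : w.val = 0
    · have : w = ⟨0, hn⟩ := Fin.ext hw
      subst this; exact hd0
    · exact (h w hw).1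
  rw [degRes_green G ⟨0, hn⟩ (fun v w => g v.val w.val) (fun v => s v.val) (fun v => hg0 _) hs0]
  · simp only [hd, Fintype.card_fin]
    rw [Fin.sum_univ_eq_sum_range (fun i => d i * g i i), Fin.sum_univ_eq_sum_range (fun i => d i),
      Fin.sum_univ_eq_sum_range (fun i => g i i), Fin.sum_univ_eq_sum_range (fun i => d i * s i)]
  · intro v w hw
    rw [(h w (fun h => hw (Fin.ext h))).2.1]
    simp only [Fin.ext_iff]
  · intro w hw
    exact (h w (fun h => hw (Fin.ext h))).2.2

lemma degree_compl {V : Type*} [Fintype V] [DecidableEq V] (G : SimpleGraph V)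
    [DecidableRel G.Adj] (w : V) (S : Finset V) (h : ∀ z, G.Adj w z ↔ z ∉ S) :
    (G.degree w : ℝ) = Fintype.card V - S.card := by
  have e : G.neighborFinset w = Sᶜ := by ext z; simp [h]
  rw [← G.card_neighborFinset_eq_degree, e, Finset.card_compl, Nat.cast_sub (Finset.card_le_univ S)]

lemma sum_tail (f : ℕ → ℝ) (a b : ℕ) (c : ℝ) (h : ∀ i, a ≤ i → i < a + b → f i = c) :
    ∑ i ∈ range (a + b), f i = ∑ i ∈ range a, f i + b * c := by
  rw [Finset.sum_range_add, Finset.sum_congr rfl (fun i hi => h (a + i) (by omega)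
    (by have := Finset.mem_range.mp hi; omega))]
  simp

/-! ### The graph `G⁰` -/

/-- Partner of a non-central triangle vertex. -/
def partner (i : ℕ) : ℕ := if i % 2 = 1 then i + 1 else i - 1

noncomputable def gr0 (t v w : ℕ) : ℝ :=
  if v = 0 then 0 else
  if v ≤ 2 * t then (if w = v then 2 / 3 else if w = partner v then 1 / 3 else 0) else
  if w = v then 1 else 0

noncomputable def sr0 (v : ℕ) : ℝ := if v = 0 then 0 else 1

noncomputable def dr0 (n t v : ℕ) : ℝ :=
  if v = 0 then n - 1 else if v ≤ 2 * t then 2 else 1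

lemma degRes_G0 (t k : ℕ) :
    degRes (G0 (2 * t + 1 + k) t) =
      ((2 * t + 1 + k : ℕ) : ℝ) * (2 * t * (4 / 3) + k)
      + ((2 * t + k) + 2 * t * 2 + k) * (2 * t * (2 / 3) + k) - 2 * (2 * t * 2 + k) := by
  classical
  rw [fin_degRes (2 * t + 1 + k) (by omega) (G0 _ t) (gr0 t) sr0 (dr0 (2 * t + 1 + k) t)]
  · have e : 2 * t + 1 + k = (1 + 2 * t) + k := by omega
    have key : ∀ (f : ℕ → ℝ) (c p : ℝ), (∀ i, 1 ≤ i → i ≤ 2 * t → f i = c) →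
        (∀ i, 2 * t < i → f i = p) →
        ∑ i ∈ range (2 * t + 1 + k), f i = f 0 + 2 * t * c + k * p := by
      intro f c p hc hp
      rw [e, sum_tail f _ k p (fun i h1 h2 => hp i (by omega)),
        sum_tail f 1 _ c (fun i h1 h2 => hc i (by omega) (by omega))]
      simp
    rw [key (fun i => dr0 (2 * t + 1 + k) t i * gr0 t i i) (4 / 3) 1,
      key (fun i => dr0 (2 * t + 1 + k) t i) 2 1,
      key (fun i => gr0 t i i) (2 / 3) 1,
      key (fun i => dr0 (2 * t + 1 + k) t i * sr0 i) 2 1]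
    · simp only [dr0, gr0, sr0, if_true]; push_cast; ring
    all_goals
      intros
      simp (disch := omega) only [dr0, gr0, sr0, if_pos, if_neg] <;> norm_num
  · intro v
    simp only [gr0, partner]
    split_ifs <;> first | rfl | contradiction | omega
  · simp [sr0]
  · rw [degree_compl _ _ {⟨0, by omega⟩}]
    · simp [dr0]
    · intro z
      simp only [G0, SimpleGraph.fromRel_adj, Fin.ext_iff, Nat.odd_iff, ne_eq,
        Finset.mem_singleton, true_or, true_and, false_and, and_true]
      omega
  · intro w hw
    by_cases h2 : w.val ≤ 2 * t
    · by_cases ho : w.val % 2 = 1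
      · obtain ⟨hd, hL⟩ := lap_two (G0 (2 * t + 1 + k) t) w ⟨0, by omega⟩ ⟨w.val + 1, by omega⟩
          (by simp only [ne_eq, Fin.ext_iff]; omega) (by
            intro z
            simp only [G0, SimpleGraph.fromRel_adj, Fin.ext_iff, Nat.odd_iff, ne_eq]
            omega)
        refine ⟨by simp [hd, dr0, hw, h2], fun v => ?_, ?_⟩
        · rw [hL]
          simp only [gr0, partner]
          split_ifs <;> first | contradiction | omega | norm_num
        · rw [hL]
          simp only [sr0]
          split_ifs <;> first | contradiction | omega | norm_num
      · obtain ⟨hd, hL⟩ := lap_two (G0 (2 * t + 1 + k) t) w ⟨0, by omega⟩ ⟨w.val - 1, by omega⟩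
          (by simp only [ne_eq, Fin.ext_iff]; omega) (by
            intro z
            simp only [G0, SimpleGraph.fromRel_adj, Fin.ext_iff, Nat.odd_iff, ne_eq]
            omega)
        refine ⟨by simp [hd, dr0, hw, h2], fun v => ?_, ?_⟩
        · rw [hL]
          simp only [gr0, partner]
          split_ifs <;> first | contradiction | omega | norm_num
        · rw [hL]
          simp only [sr0]
          split_ifs <;> first | contradiction | omega | norm_num
    · obtain ⟨hd, hL⟩ := lap_one (G0 (2 * t + 1 + k) t) w ⟨0, by omega⟩ (by
            intro z
            simp only [G0, SimpleGraph.fromRel_adj, Fin.ext_iff, Nat.odd_iff, ne_eq]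
            omega)
      refine ⟨by simp [hd, dr0, hw, h2], fun v => ?_, ?_⟩
      · rw [hL]
        simp only [gr0, partner]
        split_ifs <;> first | contradiction | omega | norm_num
      · rw [hL]
        simp only [sr0]
        split_ifs <;> first | contradiction | omega | norm_num

/-! ### The graph `G8` (with `t = s + 2`, `n = 2 s + 7 + k`) -/

noncomputable def gr8 (s v w : ℕ) : ℝ :=
  if v = 0 then 0 else
  if v ≤ 2 * s then (if w = v then 2 / 3 else if w = partner v then 1 / 3 else 0) else
  if v = 2 * s + 1 then (if w = 2 * s + 1 then 3 / 4 else if w = 2 * s + 2 then 1 / 2 else if w = 2 * s + 3 then 1 / 4 else 0) else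
  if v = 2 * s + 2 then (if w = 2 * s + 1 then 1 / 2 else if w = 2 * s + 2 then 1 else if w = 2 * s + 3 then 1 / 2 else 0) else
  if v = 2 * s + 3 then (if w = 2 * s + 1 then 1 / 4 else if w = 2 * s + 2 then 1 / 2 else if w = 2 * s + 3 then 3 / 4 else 0) else
  if v = 2 * s + 4 then (if w = 2 * s + 4 then 3 / 4 else if w = 2 * s + 5 then 1 / 2 else if w = 2 * s + 6 then 1 / 4 else 0) else
  if v = 2 * s + 5 then (if w = 2 * s + 4 then 1 / 2 else if w = 2 * s + 5 then 1 else if w = 2 * s + 6 then 1 / 2 else 0) else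
  if v = 2 * s + 6 then (if w = 2 * s + 4 then 1 / 4 else if w = 2 * s + 5 then 1 / 2 else if w = 2 * s + 6 then 3 / 4 else 0) else
  if w = v then 1 else 0

noncomputable def sr8 (s v : ℕ) : ℝ :=
  if v = 0 then 0 else
  if v = 2 * s + 1 then 3 / 2 else
  if v = 2 * s + 2 then 2 else
  if v = 2 * s + 3 then 3 / 2 else
  if v = 2 * s + 4 then 3 / 2 else
  if v = 2 * s + 5 then 2 else
  if v = 2 * s + 6 then 3 / 2 else
  1

noncomputable def dr8 (n s v : ℕ) : ℝ :=
  if v = 0 then n - 3 else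
  if v ≤ 2 * s + 6 then 2 else
  1

lemma gr8_lo (s v w : ℕ) (hv : v ≤ 2 * s) : gr8 s v w =
    if v = 0 then 0 else if w = v then 2 / 3 else if w = partner v then 1 / 3 else 0 := by
  simp only [gr8, hv, if_true]

set_option maxHeartbeats 4000000 in
lemma gr8_hi (s v w : ℕ) (hv : ¬ v ≤ 2 * s) (hw : w ≤ 2 * s) : gr8 s v w = 0 := by
  simp only [gr8, partner]
  grind (splits := 30)

lemma sr8_tri (s v : ℕ) (h0 : v ≠ 0) (hv : v ≤ 2 * s) : sr8 s v = 1 := by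
  simp only [sr8]
  grind (splits := 30)

lemma sr8_zero (s : ℕ) : sr8 s 0 = 0 := if_pos rfl

set_option maxHeartbeats 4000000 in
lemma verts_G8 (s k : ℕ) [DecidableRel (G8g (2 * s + 7 + k) (s + 2)).Adj] (w : Fin (2 * s + 7 + k)) (hw : w.val ≠ 0) :
    ((G8g (2 * s + 7 + k) (s + 2)).degree w : ℝ) = dr8 (2 * s + 7 + k) s w.val ∧
      (∀ v : ℕ, ((G8g (2 * s + 7 + k) (s + 2)).lapMatrix ℝ *ᵥ
        (fun z : Fin (2 * s + 7 + k) => gr8 s v z.val)) w = if w.val = v then 1 else 0) ∧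
      ((G8g (2 * s + 7 + k) (s + 2)).lapMatrix ℝ *ᵥ (fun z : Fin (2 * s + 7 + k) => sr8 s z.val)) w = 1 := by
  have hcases : (w.val ≤ 2 * s ∧ w.val % 2 = 1) ∨ (w.val ≤ 2 * s ∧ w.val % 2 = 0) ∨ w.val = 2 * s + 1 ∨ w.val = 2 * s + 2 ∨ w.val = 2 * s + 3 ∨ w.val = 2 * s + 4 ∨ w.val = 2 * s + 5 ∨ w.val = 2 * s + 6 ∨ 2 * s + 6 < w.val := by omega
  rcases hcases with hc | hc | hc | hc | hc | hc | hc | hc | hc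
  · obtain ⟨hd, hL⟩ := lap_two (G8g (2 * s + 7 + k) (s + 2)) w ⟨0, by omega⟩ ⟨w.val + 1, by omega⟩
      (by simp only [ne_eq, Fin.ext_iff]; omega)
      (by
        intro z
        simp only [G8g, SimpleGraph.fromRel_adj, Fin.ext_iff, Nat.odd_iff, ne_eq]
        grind)
    refine ⟨?_, fun v => ?_, ?_⟩
    · rw [hd]
      simp only [dr8]
      split_ifs <;> first | contradiction | omega | norm_num
    · rw [hL]
      show 2 * gr8 s v w.val - gr8 s v (0) - gr8 s v (w.val + 1) = (if w.val = v then 1 else 0)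
      by_cases hv : v ≤ 2 * s
      · simp only [gr8_lo s _ _ hv, partner]
        grind (splits := 30)
      · rw [gr8_hi s v w.val hv (by omega), gr8_hi s v 0 hv (by omega),
          gr8_hi s v (w.val + 1) hv (by omega)]
        rw [if_neg (by omega)]; norm_num
    · rw [hL]
      show 2 * sr8 s w.val - sr8 s (0) - sr8 s (w.val + 1) = 1
      rw [sr8_tri s w.val (by omega) (by omega), sr8_tri s (w.val + 1) (by omega) (by omega),
        sr8_zero]
      norm_num
  · obtain ⟨hd, hL⟩ := lap_two (G8g (2 * s + 7 + k) (s + 2)) w ⟨0, by omega⟩ ⟨w.val - 1, by omega⟩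
      (by simp only [ne_eq, Fin.ext_iff]; omega)
      (by
        intro z
        simp only [G8g, SimpleGraph.fromRel_adj, Fin.ext_iff, Nat.odd_iff, ne_eq]
        grind)
    refine ⟨?_, fun v => ?_, ?_⟩
    · rw [hd]
      simp only [dr8]
      split_ifs <;> first | contradiction | omega | norm_num
    · rw [hL]
      show 2 * gr8 s v w.val - gr8 s v (0) - gr8 s v (w.val - 1) = (if w.val = v then 1 else 0)
      by_cases hv : v ≤ 2 * s
      · simp only [gr8_lo s _ _ hv, partner]
        grind (splits := 30)
      · rw [gr8_hi s v w.val hv (by omega), gr8_hi s v 0 hv (by omega),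
          gr8_hi s v (w.val - 1) hv (by omega)]
        rw [if_neg (by omega)]; norm_num
    · rw [hL]
      show 2 * sr8 s w.val - sr8 s (0) - sr8 s (w.val - 1) = 1
      rw [sr8_tri s w.val (by omega) (by omega), sr8_tri s (w.val - 1) (by omega) (by omega),
        sr8_zero]
      norm_num
  · obtain ⟨hd, hL⟩ := lap_two (G8g (2 * s + 7 + k) (s + 2)) w ⟨0, by omega⟩ ⟨2 * s + 2, by omega⟩
      (by simp only [ne_eq, Fin.ext_iff]; omega)
      (by
        intro z
        simp only [G8g, SimpleGraph.fromRel_adj, Fin.ext_iff, Nat.odd_iff, ne_eq]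
        grind)
    refine ⟨?_, fun v => ?_, ?_⟩
    · rw [hd]
      simp only [dr8]
      split_ifs <;> first | contradiction | omega | norm_num
    · rw [hL]
      show 2 * gr8 s v w.val - gr8 s v (0) - gr8 s v (2 * s + 2) = (if w.val = v then 1 else 0)
      simp only [hc]
      simp only [gr8, partner]
      grind (splits := 30)
    · rw [hL]
      show 2 * sr8 s w.val - sr8 s (0) - sr8 s (2 * s + 2) = 1
      simp only [sr8]
      grind (splits := 30)
  · obtain ⟨hd, hL⟩ := lap_two (G8g (2 * s + 7 + k) (s + 2)) w ⟨2 * s + 1, by omega⟩ ⟨2 * s + 3, by omega⟩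
      (by simp only [ne_eq, Fin.ext_iff]; omega)
      (by
        intro z
        simp only [G8g, SimpleGraph.fromRel_adj, Fin.ext_iff, Nat.odd_iff, ne_eq]
        grind)
    refine ⟨?_, fun v => ?_, ?_⟩
    · rw [hd]
      simp only [dr8]
      split_ifs <;> first | contradiction | omega | norm_num
    · rw [hL]
      show 2 * gr8 s v w.val - gr8 s v (2 * s + 1) - gr8 s v (2 * s + 3) = (if w.val = v then 1 else 0)
      simp only [hc]
      simp only [gr8, partner]
      grind (splits := 30)
    · rw [hL]
      show 2 * sr8 s w.val - sr8 s (2 * s + 1) - sr8 s (2 * s + 3) = 1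
      simp only [sr8]
      grind (splits := 30)
  · obtain ⟨hd, hL⟩ := lap_two (G8g (2 * s + 7 + k) (s + 2)) w ⟨0, by omega⟩ ⟨2 * s + 2, by omega⟩
      (by simp only [ne_eq, Fin.ext_iff]; omega)
      (by
        intro z
        simp only [G8g, SimpleGraph.fromRel_adj, Fin.ext_iff, Nat.odd_iff, ne_eq]
        grind)
    refine ⟨?_, fun v => ?_, ?_⟩
    · rw [hd]
      simp only [dr8]
      split_ifs <;> first | contradiction | omega | norm_num
    · rw [hL]
      show 2 * gr8 s v w.val - gr8 s v (0) - gr8 s v (2 * s + 2) = (if w.val = v then 1 else 0)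
      simp only [hc]
      simp only [gr8, partner]
      grind (splits := 30)
    · rw [hL]
      show 2 * sr8 s w.val - sr8 s (0) - sr8 s (2 * s + 2) = 1
      simp only [sr8]
      grind (splits := 30)
  · obtain ⟨hd, hL⟩ := lap_two (G8g (2 * s + 7 + k) (s + 2)) w ⟨0, by omega⟩ ⟨2 * s + 5, by omega⟩
      (by simp only [ne_eq, Fin.ext_iff]; omega)
      (by
        intro z
        simp only [G8g, SimpleGraph.fromRel_adj, Fin.ext_iff, Nat.odd_iff, ne_eq]
        grind)
    refine ⟨?_, fun v => ?_, ?_⟩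
    · rw [hd]
      simp only [dr8]
      split_ifs <;> first | contradiction | omega | norm_num
    · rw [hL]
      show 2 * gr8 s v w.val - gr8 s v (0) - gr8 s v (2 * s + 5) = (if w.val = v then 1 else 0)
      simp only [hc]
      simp only [gr8, partner]
      grind (splits := 30)
    · rw [hL]
      show 2 * sr8 s w.val - sr8 s (0) - sr8 s (2 * s + 5) = 1
      simp only [sr8]
      grind (splits := 30)
  · obtain ⟨hd, hL⟩ := lap_two (G8g (2 * s + 7 + k) (s + 2)) w ⟨2 * s + 4, by omega⟩ ⟨2 * s + 6, by omega⟩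
      (by simp only [ne_eq, Fin.ext_iff]; omega)
      (by
        intro z
        simp only [G8g, SimpleGraph.fromRel_adj, Fin.ext_iff, Nat.odd_iff, ne_eq]
        grind)
    refine ⟨?_, fun v => ?_, ?_⟩
    · rw [hd]
      simp only [dr8]
      split_ifs <;> first | contradiction | omega | norm_num
    · rw [hL]
      show 2 * gr8 s v w.val - gr8 s v (2 * s + 4) - gr8 s v (2 * s + 6) = (if w.val = v then 1 else 0)
      simp only [hc]
      simp only [gr8, partner]
      grind (splits := 30)
    · rw [hL]
      show 2 * sr8 s w.val - sr8 s (2 * s + 4) - sr8 s (2 * s + 6) = 1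
      simp only [sr8]
      grind (splits := 30)
  · obtain ⟨hd, hL⟩ := lap_two (G8g (2 * s + 7 + k) (s + 2)) w ⟨0, by omega⟩ ⟨2 * s + 5, by omega⟩
      (by simp only [ne_eq, Fin.ext_iff]; omega)
      (by
        intro z
        simp only [G8g, SimpleGraph.fromRel_adj, Fin.ext_iff, Nat.odd_iff, ne_eq]
        grind)
    refine ⟨?_, fun v => ?_, ?_⟩
    · rw [hd]
      simp only [dr8]
      split_ifs <;> first | contradiction | omega | norm_num
    · rw [hL]
      show 2 * gr8 s v w.val - gr8 s v (0) - gr8 s v (2 * s + 5) = (if w.val = v then 1 else 0)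
      simp only [hc]
      simp only [gr8, partner]
      grind (splits := 30)
    · rw [hL]
      show 2 * sr8 s w.val - sr8 s (0) - sr8 s (2 * s + 5) = 1
      simp only [sr8]
      grind (splits := 30)
  · obtain ⟨hd, hL⟩ := lap_one (G8g (2 * s + 7 + k) (s + 2)) w ⟨0, by omega⟩
      (by
        intro z
        simp only [G8g, SimpleGraph.fromRel_adj, Fin.ext_iff, Nat.odd_iff, ne_eq]
        grind)
    refine ⟨?_, fun v => ?_, ?_⟩
    · rw [hd]
      simp only [dr8]
      split_ifs <;> first | contradiction | omega | norm_num
    · rw [hL]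
      show gr8 s v w.val - gr8 s v (0) = (if w.val = v then 1 else 0)
      have e1 : ¬ w.val = 2 * s + 1 := by omega
      have e2 : ¬ w.val = 2 * s + 2 := by omega
      have e3 : ¬ w.val = 2 * s + 3 := by omega
      have e4 : ¬ w.val = 2 * s + 4 := by omega
      have e5 : ¬ w.val = 2 * s + 5 := by omega
      have e6 : ¬ w.val = 2 * s + 6 := by omega
      have e7 : ¬ w.val = 1 := by omega
      have e8 : ¬ w.val = 2 := by omega
      simp only [gr8, partner, e1, e2, e3, e4, e5, e6, e7, e8, if_false]
      grind (splits := 30)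
    · rw [hL]
      show sr8 s w.val - sr8 s (0) = 1
      simp only [sr8]
      grind (splits := 30)

set_option maxHeartbeats 4000000 in
lemma degRes_G8 (s k : ℕ) :
    degRes (G8g (2 * s + 7 + k) (s + 2)) =
      ((2 * s + 7 + k : ℕ) : ℝ) * (2 * s * (4 / 3) + 10 + k)
      + ((2 * s + 4 + k) + 2 * s * 2 + 12 + k) * (2 * s * (2 / 3) + 5 + k)
      - 2 * (2 * s * 2 + 20 + k) := by
  classical
  rw [fin_degRes (2 * s + 7 + k) (by omega) (G8g (2 * s + 7 + k) (s + 2)) (gr8 s) (sr8 s) (dr8 (2 * s + 7 + k) s)]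
  · have key : ∀ (f : ℕ → ℝ) (c p : ℝ), (∀ i, 1 ≤ i → i ≤ 2 * s → f i = c) →
        (∀ i, 2 * s + 6 < i → f i = p) →
        ∑ i ∈ range (2 * s + 7 + k), f i = f 0 + 2 * s * c + f (2 * s + 1) + f (2 * s + 2)
          + f (2 * s + 3) + f (2 * s + 4) + f (2 * s + 5) + f (2 * s + 6) + k * p := by
      intro f c p hc hp
      rw [sum_tail f _ k p (fun i h1 h2 => hp i (by omega))]
      simp only [Finset.sum_range_succ _ (2 * s + _)]
      rw [show 2 * s + 1 = 1 + 2 * s by omega,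
        sum_tail f 1 _ c (fun i h1 h2 => hc i (by omega) (by omega))]
      simp
    rw [key (fun i => dr8 (2 * s + 7 + k) s i * gr8 s i i) (4 / 3) 1,
      key (fun i => dr8 (2 * s + 7 + k) s i) 2 1,
      key (fun i => gr8 s i i) (2 / 3) 1,
      key (fun i => dr8 (2 * s + 7 + k) s i * sr8 s i) 2 1]
    · simp (disch := omega) only [dr8, gr8, sr8, if_pos, if_neg]; push_cast; ring
    all_goals
      intros
      simp (disch := omega) only [dr8, gr8, sr8, if_pos, if_neg] <;> norm_num
  · intro v
    simp only [gr8, partner]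
    grind (splits := 30)
  · simp [sr8]
  · rw [degree_compl _ _ {⟨0, by omega⟩, ⟨2 * s + 2, by omega⟩, ⟨2 * s + 5, by omega⟩}]
    · rw [Finset.card_eq_three.mpr ⟨_, _, _, ?_, ?_, ?_, rfl⟩]
      · simp [dr8]
      all_goals
        simp only [ne_eq, Fin.ext_iff]; omega
    · intro z
      simp only [G8g, SimpleGraph.fromRel_adj, Fin.ext_iff, Nat.odd_iff, ne_eq,
        Finset.mem_singleton, Finset.mem_insert, true_and]
      grind (splits := 30)
  · exact verts_G8 s k

/-! ### The graph `G9` (with `t = s + 2`, `n = 2 s + 7 + k`) -/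

noncomputable def gr9 (s v w : ℕ) : ℝ :=
  if v = 0 then 0 else
  if v = 1 then (if w = 1 then 2 / 3 else if w = 2 then 1 / 3 else if w = 2 * s + 6 then 2 / 3 else 0) else
  if v = 2 then (if w = 1 then 1 / 3 else if w = 2 then 2 / 3 else if w = 2 * s + 6 then 1 / 3 else 0) else
  if v ≤ 2 * s + 2 then (if w = v then 2 / 3 else if w = partner v then 1 / 3 else 0) else
  if v = 2 * s + 3 then (if w = 2 * s + 3 then 3 / 4 else if w = 2 * s + 4 then 1 / 2 else if w = 2 * s + 5 then 1 / 4 else 0) else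
  if v = 2 * s + 4 then (if w = 2 * s + 3 then 1 / 2 else if w = 2 * s + 4 then 1 else if w = 2 * s + 5 then 1 / 2 else 0) else
  if v = 2 * s + 5 then (if w = 2 * s + 3 then 1 / 4 else if w = 2 * s + 4 then 1 / 2 else if w = 2 * s + 5 then 3 / 4 else 0) else
  if v = 2 * s + 6 then (if w = 1 then 2 / 3 else if w = 2 then 1 / 3 else if w = 2 * s + 6 then 5 / 3 else 0) else
  if w = v then 1 else 0

noncomputable def sr9 (s v : ℕ) : ℝ :=
  if v = 0 then 0 else
  if v = 1 then 5 / 3 else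
  if v = 2 then 4 / 3 else
  if v = 2 * s + 3 then 3 / 2 else
  if v = 2 * s + 4 then 2 else
  if v = 2 * s + 5 then 3 / 2 else
  if v = 2 * s + 6 then 8 / 3 else
  1

noncomputable def dr9 (n s v : ℕ) : ℝ :=
  if v = 0 then n - 3 else
  if v = 1 then 3 else
  if v ≤ 2 * s + 5 then 2 else
  1

lemma gr9_lo (s v w : ℕ) (hv : 3 ≤ v ∧ v ≤ 2 * s + 2) : gr9 s v w =
    if w = v then 2 / 3 else if w = partner v then 1 / 3 else 0 := by
  obtain ⟨h1, h2⟩ := hv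
  simp (disch := omega) only [gr9, if_pos h2, if_neg]

set_option maxHeartbeats 4000000 in
lemma gr9_hi (s v w : ℕ) (hv : ¬ (3 ≤ v ∧ v ≤ 2 * s + 2))
    (hw : w = 0 ∨ 3 ≤ w ∧ w ≤ 2 * s + 2) : gr9 s v w = 0 := by
  simp only [gr9, partner]
  grind (splits := 30)

lemma sr9_tri (s v : ℕ) (h0 : 3 ≤ v) (hv : v ≤ 2 * s + 2) : sr9 s v = 1 := by
  simp only [sr9]
  grind (splits := 30)

lemma sr9_zero (s : ℕ) : sr9 s 0 = 0 := if_pos rfl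

set_option maxHeartbeats 4000000 in
lemma verts_G9 (s k : ℕ) [DecidableRel (G9g (2 * s + 7 + k) (s + 2)).Adj] (w : Fin (2 * s + 7 + k)) (hw : w.val ≠ 0) :
    ((G9g (2 * s + 7 + k) (s + 2)).degree w : ℝ) = dr9 (2 * s + 7 + k) s w.val ∧
      (∀ v : ℕ, ((G9g (2 * s + 7 + k) (s + 2)).lapMatrix ℝ *ᵥ
        (fun z : Fin (2 * s + 7 + k) => gr9 s v z.val)) w = if w.val = v then 1 else 0) ∧
      ((G9g (2 * s + 7 + k) (s + 2)).lapMatrix ℝ *ᵥ (fun z : Fin (2 * s + 7 + k) => sr9 s z.val)) w = 1 := by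
  have hcases : w.val = 1 ∨ w.val = 2 ∨ (3 ≤ w.val ∧ w.val ≤ 2 * s + 2 ∧ w.val % 2 = 1) ∨ (3 ≤ w.val ∧ w.val ≤ 2 * s + 2 ∧ w.val % 2 = 0) ∨ w.val = 2 * s + 3 ∨ w.val = 2 * s + 4 ∨ w.val = 2 * s + 5 ∨ w.val = 2 * s + 6 ∨ 2 * s + 6 < w.val := by omega
  rcases hcases with hc | hc | hc | hc | hc | hc | hc | hc | hc
  · obtain ⟨hd, hL⟩ := lap_three (G9g (2 * s + 7 + k) (s + 2)) w ⟨0, by omega⟩ ⟨2, by omega⟩ ⟨2 * s + 6, by omega⟩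
      (by simp only [ne_eq, Fin.ext_iff]; omega) (by simp only [ne_eq, Fin.ext_iff]; omega) (by simp only [ne_eq, Fin.ext_iff]; omega)
      (by
        intro z
        simp only [G9g, SimpleGraph.fromRel_adj, Fin.ext_iff, Nat.odd_iff, ne_eq]
        grind)
    refine ⟨?_, fun v => ?_, ?_⟩
    · rw [hd]
      simp only [dr9]
      split_ifs <;> first | contradiction | omega | norm_num
    · rw [hL]
      show 3 * gr9 s v w.val - gr9 s v (0) - gr9 s v (2) - gr9 s v (2 * s + 6) = (if w.val = v then 1 else 0)
      simp only [hc]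
      simp only [gr9, partner]
      grind (splits := 30)
    · rw [hL]
      show 3 * sr9 s w.val - sr9 s (0) - sr9 s (2) - sr9 s (2 * s + 6) = 1
      simp only [sr9]
      grind (splits := 30)
  · obtain ⟨hd, hL⟩ := lap_two (G9g (2 * s + 7 + k) (s + 2)) w ⟨0, by omega⟩ ⟨1, by omega⟩
      (by simp only [ne_eq, Fin.ext_iff]; omega)
      (by
        intro z
        simp only [G9g, SimpleGraph.fromRel_adj, Fin.ext_iff, Nat.odd_iff, ne_eq]
        grind)
    refine ⟨?_, fun v => ?_, ?_⟩
    · rw [hd]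
      simp only [dr9]
      split_ifs <;> first | contradiction | omega | norm_num
    · rw [hL]
      show 2 * gr9 s v w.val - gr9 s v (0) - gr9 s v (1) = (if w.val = v then 1 else 0)
      simp only [hc]
      simp only [gr9, partner]
      grind (splits := 30)
    · rw [hL]
      show 2 * sr9 s w.val - sr9 s (0) - sr9 s (1) = 1
      simp only [sr9]
      grind (splits := 30)
  · obtain ⟨hd, hL⟩ := lap_two (G9g (2 * s + 7 + k) (s + 2)) w ⟨0, by omega⟩ ⟨w.val + 1, by omega⟩
      (by simp only [ne_eq, Fin.ext_iff]; omega)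
      (by
        intro z
        simp only [G9g, SimpleGraph.fromRel_adj, Fin.ext_iff, Nat.odd_iff, ne_eq]
        grind)
    refine ⟨?_, fun v => ?_, ?_⟩
    · rw [hd]
      simp only [dr9]
      split_ifs <;> first | contradiction | omega | norm_num
    · rw [hL]
      show 2 * gr9 s v w.val - gr9 s v (0) - gr9 s v (w.val + 1) = (if w.val = v then 1 else 0)
      by_cases hv : 3 ≤ v ∧ v ≤ 2 * s + 2
      · simp only [gr9_lo s _ _ hv, partner]
        grind (splits := 30)
      · rw [gr9_hi s v w.val hv (by omega), gr9_hi s v 0 hv (by omega),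
          gr9_hi s v (w.val + 1) hv (by omega)]
        rw [if_neg (by omega)]; norm_num
    · rw [hL]
      show 2 * sr9 s w.val - sr9 s (0) - sr9 s (w.val + 1) = 1
      rw [sr9_tri s w.val (by omega) (by omega), sr9_tri s (w.val + 1) (by omega) (by omega),
        sr9_zero]
      norm_num
  · obtain ⟨hd, hL⟩ := lap_two (G9g (2 * s + 7 + k) (s + 2)) w ⟨0, by omega⟩ ⟨w.val - 1, by omega⟩
      (by simp only [ne_eq, Fin.ext_iff]; omega)
      (by
        intro z
        simp only [G9g, SimpleGraph.fromRel_adj, Fin.ext_iff, Nat.odd_iff, ne_eq]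
        grind)
    refine ⟨?_, fun v => ?_, ?_⟩
    · rw [hd]
      simp only [dr9]
      split_ifs <;> first | contradiction | omega | norm_num
    · rw [hL]
      show 2 * gr9 s v w.val - gr9 s v (0) - gr9 s v (w.val - 1) = (if w.val = v then 1 else 0)
      by_cases hv : 3 ≤ v ∧ v ≤ 2 * s + 2
      · simp only [gr9_lo s _ _ hv, partner]
        grind (splits := 30)
      · rw [gr9_hi s v w.val hv (by omega), gr9_hi s v 0 hv (by omega),
          gr9_hi s v (w.val - 1) hv (by omega)]
        rw [if_neg (by omega)]; norm_num
    · rw [hL]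
      show 2 * sr9 s w.val - sr9 s (0) - sr9 s (w.val - 1) = 1
      rw [sr9_tri s w.val (by omega) (by omega), sr9_tri s (w.val - 1) (by omega) (by omega),
        sr9_zero]
      norm_num
  · obtain ⟨hd, hL⟩ := lap_two (G9g (2 * s + 7 + k) (s + 2)) w ⟨0, by omega⟩ ⟨2 * s + 4, by omega⟩
      (by simp only [ne_eq, Fin.ext_iff]; omega)
      (by
        intro z
        simp only [G9g, SimpleGraph.fromRel_adj, Fin.ext_iff, Nat.odd_iff, ne_eq]
        grind)
    refine ⟨?_, fun v => ?_, ?_⟩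
    · rw [hd]
      simp only [dr9]
      split_ifs <;> first | contradiction | omega | norm_num
    · rw [hL]
      show 2 * gr9 s v w.val - gr9 s v (0) - gr9 s v (2 * s + 4) = (if w.val = v then 1 else 0)
      simp only [hc]
      simp only [gr9, partner]
      grind (splits := 30)
    · rw [hL]
      show 2 * sr9 s w.val - sr9 s (0) - sr9 s (2 * s + 4) = 1
      simp only [sr9]
      grind (splits := 30)
  · obtain ⟨hd, hL⟩ := lap_two (G9g (2 * s + 7 + k) (s + 2)) w ⟨2 * s + 3, by omega⟩ ⟨2 * s + 5, by omega⟩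
      (by simp only [ne_eq, Fin.ext_iff]; omega)
      (by
        intro z
        simp only [G9g, SimpleGraph.fromRel_adj, Fin.ext_iff, Nat.odd_iff, ne_eq]
        grind)
    refine ⟨?_, fun v => ?_, ?_⟩
    · rw [hd]
      simp only [dr9]
      split_ifs <;> first | contradiction | omega | norm_num
    · rw [hL]
      show 2 * gr9 s v w.val - gr9 s v (2 * s + 3) - gr9 s v (2 * s + 5) = (if w.val = v then 1 else 0)
      simp only [hc]
      simp only [gr9, partner]
      grind (splits := 30)
    · rw [hL]
      show 2 * sr9 s w.val - sr9 s (2 * s + 3) - sr9 s (2 * s + 5) = 1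
      simp only [sr9]
      grind (splits := 30)
  · obtain ⟨hd, hL⟩ := lap_two (G9g (2 * s + 7 + k) (s + 2)) w ⟨0, by omega⟩ ⟨2 * s + 4, by omega⟩
      (by simp only [ne_eq, Fin.ext_iff]; omega)
      (by
        intro z
        simp only [G9g, SimpleGraph.fromRel_adj, Fin.ext_iff, Nat.odd_iff, ne_eq]
        grind)
    refine ⟨?_, fun v => ?_, ?_⟩
    · rw [hd]
      simp only [dr9]
      split_ifs <;> first | contradiction | omega | norm_num
    · rw [hL]
      show 2 * gr9 s v w.val - gr9 s v (0) - gr9 s v (2 * s + 4) = (if w.val = v then 1 else 0)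
      simp only [hc]
      simp only [gr9, partner]
      grind (splits := 30)
    · rw [hL]
      show 2 * sr9 s w.val - sr9 s (0) - sr9 s (2 * s + 4) = 1
      simp only [sr9]
      grind (splits := 30)
  · obtain ⟨hd, hL⟩ := lap_one (G9g (2 * s + 7 + k) (s + 2)) w ⟨1, by omega⟩
      (by
        intro z
        simp only [G9g, SimpleGraph.fromRel_adj, Fin.ext_iff, Nat.odd_iff, ne_eq]
        grind)
    refine ⟨?_, fun v => ?_, ?_⟩
    · rw [hd]
      simp only [dr9]
      split_ifs <;> first | contradiction | omega | norm_num
    · rw [hL]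
      show gr9 s v w.val - gr9 s v (1) = (if w.val = v then 1 else 0)
      simp only [hc]
      simp only [gr9, partner]
      grind (splits := 30)
    · rw [hL]
      show sr9 s w.val - sr9 s (1) = 1
      simp only [sr9]
      grind (splits := 30)
  · obtain ⟨hd, hL⟩ := lap_one (G9g (2 * s + 7 + k) (s + 2)) w ⟨0, by omega⟩
      (by
        intro z
        simp only [G9g, SimpleGraph.fromRel_adj, Fin.ext_iff, Nat.odd_iff, ne_eq]
        grind)
    refine ⟨?_, fun v => ?_, ?_⟩
    · rw [hd]
      simp only [dr9]
      split_ifs <;> first | contradiction | omega | norm_num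
    · rw [hL]
      show gr9 s v w.val - gr9 s v (0) = (if w.val = v then 1 else 0)
      have e1 : ¬ w.val = 2 * s + 1 := by omega
      have e2 : ¬ w.val = 2 * s + 2 := by omega
      have e3 : ¬ w.val = 2 * s + 3 := by omega
      have e4 : ¬ w.val = 2 * s + 4 := by omega
      have e5 : ¬ w.val = 2 * s + 5 := by omega
      have e6 : ¬ w.val = 2 * s + 6 := by omega
      have e7 : ¬ w.val = 1 := by omega
      have e8 : ¬ w.val = 2 := by omega
      simp only [gr9, partner, e1, e2, e3, e4, e5, e6, e7, e8, if_false]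
      grind (splits := 30)
    · rw [hL]
      show sr9 s w.val - sr9 s (0) = 1
      simp only [sr9]
      grind (splits := 30)

set_option maxHeartbeats 4000000 in
lemma degRes_G9 (s k : ℕ) :
    degRes (G9g (2 * s + 7 + k) (s + 2)) =
      ((2 * s + 7 + k : ℕ) : ℝ) * (2 * s * (4 / 3) + 10 + k)
      + ((2 * s + 4 + k) + 2 * s * 2 + 12 + k) * (2 * s * (2 / 3) + 11 / 2 + k)
      - 2 * (2 * s * 2 + 61 / 3 + k) := by
  classical
  rw [fin_degRes (2 * s + 7 + k) (by omega) (G9g (2 * s + 7 + k) (s + 2)) (gr9 s) (sr9 s) (dr9 (2 * s + 7 + k) s)]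
  · have key : ∀ (f : ℕ → ℝ) (c p : ℝ), (∀ i, 3 ≤ i → i ≤ 2 * s + 2 → f i = c) →
        (∀ i, 2 * s + 6 < i → f i = p) →
        ∑ i ∈ range (2 * s + 7 + k), f i = f 0 + f 1 + f 2 + 2 * s * c
          + f (2 * s + 3) + f (2 * s + 4) + f (2 * s + 5) + f (2 * s + 6) + k * p := by
      intro f c p hc hp
      rw [sum_tail f _ k p (fun i h1 h2 => hp i (by omega)), Finset.sum_range_succ,
        Finset.sum_range_succ, Finset.sum_range_succ, Finset.sum_range_succ,
        show 2 * s + 3 = 3 + 2 * s by omega,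
        sum_tail f 3 _ c (fun i h1 h2 => hc i (by omega) (by omega))]
      simp [Finset.sum_range_succ]
    rw [key (fun i => dr9 (2 * s + 7 + k) s i * gr9 s i i) (4 / 3) 1,
      key (fun i => dr9 (2 * s + 7 + k) s i) 2 1,
      key (fun i => gr9 s i i) (2 / 3) 1,
      key (fun i => dr9 (2 * s + 7 + k) s i * sr9 s i) 2 1]
    · simp (disch := omega) only [dr9, gr9, sr9, if_pos, if_neg]; push_cast; ring
    all_goals
      intros
      simp (disch := omega) only [dr9, gr9, sr9, if_pos, if_neg] <;> norm_num
  · intro v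
    simp only [gr9, partner]
    grind (splits := 30)
  · simp [sr9]
  · rw [degree_compl _ _ {⟨0, by omega⟩, ⟨2 * s + 4, by omega⟩, ⟨2 * s + 6, by omega⟩}]
    · rw [Finset.card_eq_three.mpr ⟨_, _, _, ?_, ?_, ?_, rfl⟩]
      · simp [dr9]
      all_goals
        simp only [ne_eq, Fin.ext_iff]; omega
    · intro z
      simp only [G9g, SimpleGraph.fromRel_adj, Fin.ext_iff, Nat.odd_iff, ne_eq,
        Finset.mem_singleton, Finset.mem_insert, true_and]
      grind (splits := 30)
  · exact verts_G9 s k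

end Concrete

/-- `D_R(G9) - D_R(G8) = n + t - 5/3 > 0`, and
`D_R(G9) - D_R(G⁰(n,t)) = (13/3)n + (5/3)t - 67/3`. -/
theorem stmt_16 (n t : ℕ) (h1 : 2 * t + 3 ≤ n) (ht : 2 ≤ t) :
    (degRes (G9g n t) - degRes (G8g n t) = (n : ℝ) + t - 5 / 3 ∧
      (0 : ℝ) < (n : ℝ) + t - 5 / 3) ∧
    degRes (G9g n t) - degRes (G0 n t) = (13 / 3) * (n : ℝ) + (5 / 3) * t - 67 / 3 := by
  obtain ⟨s, rfl⟩ : ∃ s, t = s + 2 := ⟨t - 2, by omega⟩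
  obtain ⟨k, rfl⟩ : ∃ k, n = 2 * s + 7 + k := ⟨n - (2 * s + 7), by omega⟩
  have h0 := degRes_G0 (s + 2) (k + 2)
  rw [show 2 * (s + 2) + 1 + (k + 2) = 2 * s + 7 + k by omega] at h0
  rw [h0, degRes_G8, degRes_G9]
  push_cast
  have hs : (0 : ℝ) ≤ s := Nat.cast_nonneg s
  have hk : (0 : ℝ) ≤ k := Nat.cast_nonneg k
  refine ⟨⟨?_, ?_⟩, ?_⟩
  · ring
  · linarith
  · ring
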